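/- arXiv:2111.08912 — 2 statements merged into one kernel-verified Lean document; each statement's English description precedes it below -/
import Mathlib

section
/- Let 10 < P_1 < Q_1 ≤ X, and let S^c_{P_1,Q_1,X} denote the complement of S_{P_1,Q_1,X} in the set of positive integers n ≤ X. Then |S^c_{P_1,Q_1,X}| ≪ Σ_{j≤J} (log P_j)/(log Q_j) · X ≪ (log P_1)/(log Q_1) · X, with absolute implied constants. -/
open Finset

/-- `P_j = exp(j^{4j}·(log Q₁)^{j−1}·(log P₁))`; note `P_1 = P₁`. -/
noncomputable def Pseq (P₁ Q₁ : ℝ) (j : ℕ) : ℝ :=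
  Real.exp ((j : ℝ) ^ (4 * j) * Real.log Q₁ ^ (j - 1) * Real.log P₁)

/-- `Q_j = exp(j^{4j+2}·(log Q₁)^j)`; note `Q_1 = Q₁`. -/
noncomputable def Qseq (Q₁ : ℝ) (j : ℕ) : ℝ :=
  Real.exp ((j : ℝ) ^ (4 * j + 2) * Real.log Q₁ ^ j)

/-- `J` is the largest index with `Q_J ≤ exp(√((1/2)·log X))`. -/
noncomputable def Jmax (Q₁ X : ℝ) : ℕ :=
  sSup {j : ℕ | Qseq Q₁ j ≤ Real.exp (Real.sqrt (Real.log X / 2))}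

/-- `S_{P₁,Q₁,X}` : the set of positive integers having at least one prime factor
in each interval `[P_j, Q_j]` for `j = 1, …, J`. -/
def memS (P₁ Q₁ X : ℝ) (n : ℕ) : Prop :=
  0 < n ∧ ∀ j ∈ Icc 1 (Jmax Q₁ X),
    ∃ p : ℕ, p.Prime ∧ p ∣ n ∧ Pseq P₁ Q₁ j ≤ (p : ℝ) ∧ (p : ℝ) ≤ Qseq Q₁ j

/-! Write `L(s)` for the sum of `1 / n` over the integers `n ≤ N` composed of primes in `s`. Unique
factorization makes `L` multiplicative over disjoint unions of sets of primes, up to a change of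
the range of summation, and Chebyshev's bound `ψ(x) ≪ x` together with `log n = ∑_{d ∣ n} Λ(d)`
bounds the number of `n ≤ N` composed of primes in `s` by `O(N L(s) / log N)`. Since
`L(s) L(sᶜ) ≪ log N`, at most `O(N / L(s))` integers up to `N` have no prime factor in `s`.
When `s = [P, Q]`, the primes below `P` contribute only `O(log P)`, by Mertens' estimate
`∑_{p < P} (log p) / p ≪ log P`, whereas `L([1, Q]) ≥ log Q`; hence `L([P, Q]) ≫ log Q / log P`.
The theorem is the union bound over `[P_j, Q_j]`, where `log P_j / log Q_j = j⁻² log P₁ / log Q₁`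
is summable over `j`. -/

open scoped ArithmeticFunction.vonMangoldt Pointwise

variable {s t : Set ℕ} {M N : ℕ}

open scoped Classical in
/-- The positive integers `n ≤ N` all of whose prime factors lie in `s`: a truncated form of
`Nat.factoredNumbers` in which `s` may be infinite. Elements of `s` that are not prime are
irrelevant. -/
noncomputable def factoredUpTo (s : Set ℕ) (N : ℕ) : Finset ℕ :=
  {n ∈ Icc 1 N | (n.primeFactors : Set ℕ) ⊆ s}

theorem mem_factoredUpTo {n : ℕ} :
    n ∈ factoredUpTo s N ↔ (1 ≤ n ∧ n ≤ N) ∧ (n.primeFactors : Set ℕ) ⊆ s := by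
  simp only [factoredUpTo, mem_filter, mem_Icc]

theorem factoredUpTo_subset_Icc (s : Set ℕ) (N : ℕ) : factoredUpTo s N ⊆ Icc 1 N :=
  fun _ hn => mem_Icc.2 (mem_factoredUpTo.1 hn).1

theorem mem_factoredUpTo_of_dvd {m n : ℕ} (hn : n ∈ factoredUpTo s N) (hmn : m ∣ n) :
    m ∈ factoredUpTo s N := by
  obtain ⟨⟨hn1, hnN⟩, hns⟩ := mem_factoredUpTo.1 hn
  exact mem_factoredUpTo.2 ⟨⟨Nat.pos_of_dvd_of_pos hmn hn1, (Nat.le_of_dvd hn1 hmn).trans hnN⟩,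
    (coe_subset.2 (Nat.primeFactors_mono hmn (by lia))).trans hns⟩

theorem factoredUpTo_filter_dvd_subset_image (s : Set ℕ) (N d : ℕ) :
    {n ∈ factoredUpTo s N | d ∣ n} ⊆ (factoredUpTo s N).image (d * ·) := by
  intro n hn
  obtain ⟨hn, m, rfl⟩ := mem_filter.1 hn
  exact mem_image_of_mem _ (mem_factoredUpTo_of_dvd hn (dvd_mul_left m d))

theorem exists_eq_mul_of_primeFactors_subset_union {n : ℕ} (hn : n ≠ 0)
    (h : (n.primeFactors : Set ℕ) ⊆ s ∪ t) :
    ∃ a b, n = a * b ∧ (a.primeFactors : Set ℕ) ⊆ s ∧ (b.primeFactors : Set ℕ) ⊆ t := by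
  induction n using induction_on_primes with
  | zero => exact absurd rfl hn
  | one => exact ⟨1, 1, rfl, by simp, by simp⟩
  | prime_mul p m hp ih =>
    have hm : m ≠ 0 := right_ne_zero_of_mul hn
    rw [Nat.primeFactors_mul hp.ne_zero hm, hp.primeFactors, coe_union, coe_singleton,
      Set.union_subset_iff, Set.singleton_subset_iff] at h
    obtain ⟨a, b, rfl, ha, hb⟩ := ih hm h.2
    have ha0 : a ≠ 0 := left_ne_zero_of_mul hm
    have hb0 : b ≠ 0 := right_ne_zero_of_mul hm
    rcases h.1 with hps | hpt
    · refine ⟨p * a, b, (mul_assoc ..).symm, ?_, hb⟩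
      simp [Nat.primeFactors_mul hp.ne_zero ha0, hp.primeFactors, Set.insert_subset_iff, hps, ha]
    · refine ⟨a, p * b, mul_left_comm .., ha, ?_⟩
      simp [Nat.primeFactors_mul hp.ne_zero hb0, hp.primeFactors, Set.insert_subset_iff, hpt, hb]

theorem factoredUpTo_union_subset_mul (s t : Set ℕ) (N : ℕ) :
    factoredUpTo (s ∪ t) N ⊆ factoredUpTo s N * factoredUpTo t N := by
  intro n hn
  obtain ⟨⟨hn1, hnN⟩, hst⟩ := mem_factoredUpTo.1 hn
  obtain ⟨a, b, rfl, ha, hb⟩ := exists_eq_mul_of_primeFactors_subset_union (by lia) hst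
  have ha0 : 0 < a := Nat.pos_of_mul_pos_right hn1
  have hb0 : 0 < b := Nat.pos_of_mul_pos_left hn1
  exact mul_mem_mul
    (mem_factoredUpTo.2 ⟨⟨ha0, (Nat.le_mul_of_pos_right a hb0).trans hnN⟩, ha⟩)
    (mem_factoredUpTo.2 ⟨⟨hb0, (Nat.le_mul_of_pos_left b ha0).trans hnN⟩, hb⟩)

theorem factoredUpTo_mul_subset_union (s t : Set ℕ) (M N : ℕ) :
    factoredUpTo s M * factoredUpTo t N ⊆ factoredUpTo (s ∪ t) (M * N) := by
  intro n hn
  obtain ⟨a, ha, b, hb, rfl⟩ := mem_mul.1 hn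
  obtain ⟨⟨ha1, haM⟩, has⟩ := mem_factoredUpTo.1 ha
  obtain ⟨⟨hb1, hbN⟩, hbt⟩ := mem_factoredUpTo.1 hb
  refine mem_factoredUpTo.2 ⟨⟨Nat.mul_pos ha1 hb1, Nat.mul_le_mul haM hbN⟩, ?_⟩
  rw [Nat.primeFactors_mul (by lia) (by lia), coe_union]
  exact Set.union_subset_union has hbt

theorem coprime_of_mem_factoredUpTo {a b : ℕ} (hst : Disjoint s t) (ha : a ∈ factoredUpTo s M)
    (hb : b ∈ factoredUpTo t N) : a.Coprime b := by
  obtain ⟨⟨ha1, -⟩, has⟩ := mem_factoredUpTo.1 ha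
  obtain ⟨⟨hb1, -⟩, hbt⟩ := mem_factoredUpTo.1 hb
  exact (Nat.disjoint_primeFactors (by lia) (by lia)).1 (disjoint_coe.1 (hst.mono has hbt))

theorem injOn_mul_factoredUpTo (hst : Disjoint s t) (M N : ℕ) :
    Set.InjOn (fun x : ℕ × ℕ => x.1 * x.2) (factoredUpTo s M ×ˢ factoredUpTo t N : Finset _) := by
  rintro ⟨a, b⟩ hab ⟨c, d⟩ hcd (h : a * b = c * d)
  obtain ⟨ha, hb⟩ := mem_product.1 (mem_coe.1 hab)
  obtain ⟨hc, hd⟩ := mem_product.1 (mem_coe.1 hcd)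
  obtain rfl : a = c := Nat.dvd_antisymm
    ((coprime_of_mem_factoredUpTo hst ha hd).dvd_of_dvd_mul_right (h ▸ dvd_mul_right a b))
    ((coprime_of_mem_factoredUpTo hst hc hb).dvd_of_dvd_mul_right (h ▸ dvd_mul_right c d))
  rw [Nat.eq_of_mul_eq_mul_left (mem_factoredUpTo.1 ha).1.1 h]

/-- The logarithmic sum `∑ 1 / n` over the positive integers `n ≤ N` all of whose prime factors lie
in `s`, a truncation of the Euler product `∏_{p ∈ s} (1 - 1 / p)⁻¹`. -/
noncomputable def reciprocalSum (s : Set ℕ) (N : ℕ) : ℝ :=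
  ∑ n ∈ factoredUpTo s N, (n : ℝ)⁻¹

theorem reciprocalSum_nonneg (s : Set ℕ) (N : ℕ) : 0 ≤ reciprocalSum s N :=
  sum_nonneg fun _ _ => by positivity

theorem cast_harmonic_eq_sum_Icc (N : ℕ) : (harmonic N : ℝ) = ∑ n ∈ Icc 1 N, (n : ℝ)⁻¹ := by
  simp [harmonic_eq_sum_Icc]

theorem reciprocalSum_le_harmonic (s : Set ℕ) (N : ℕ) : reciprocalSum s N ≤ harmonic N := by
  rw [cast_harmonic_eq_sum_Icc]
  exact sum_le_sum_of_subset_of_nonneg (factoredUpTo_subset_Icc s N) fun _ _ _ => by positivity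

theorem harmonic_le_reciprocalSum (hMN : M ≤ N) (hs : Set.Icc 1 M ⊆ s) :
    harmonic M ≤ reciprocalSum s N := by
  rw [cast_harmonic_eq_sum_Icc]
  refine sum_le_sum_of_subset_of_nonneg (fun n hn => ?_) fun _ _ _ => by positivity
  obtain ⟨hn1, hnM⟩ := mem_Icc.1 hn
  exact mem_factoredUpTo.2 ⟨⟨hn1, hnM.trans hMN⟩, fun p hp => hs
    ⟨Nat.pos_of_mem_primeFactors hp, (Nat.le_of_mem_primeFactors hp).trans hnM⟩⟩

theorem reciprocalSum_union_le_mul (s t : Set ℕ) (N : ℕ) :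
    reciprocalSum (s ∪ t) N ≤ reciprocalSum s N * reciprocalSum t N := by
  calc reciprocalSum (s ∪ t) N
      ≤ ∑ n ∈ factoredUpTo s N * factoredUpTo t N, (n : ℝ)⁻¹ :=
        sum_le_sum_of_subset_of_nonneg (factoredUpTo_union_subset_mul s t N)
          fun _ _ _ => by positivity
    _ ≤ ∑ x ∈ factoredUpTo s N ×ˢ factoredUpTo t N, ((x.1 * x.2 : ℕ) : ℝ)⁻¹ :=
        sum_image_le_of_nonneg fun _ _ => by positivity
    _ = reciprocalSum s N * reciprocalSum t N := by
        simp only [Nat.cast_mul, mul_inv, reciprocalSum, sum_mul_sum, sum_product]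

theorem reciprocalSum_mul_le_union (hst : Disjoint s t) (M N : ℕ) :
    reciprocalSum s M * reciprocalSum t N ≤ reciprocalSum (s ∪ t) (M * N) := by
  calc reciprocalSum s M * reciprocalSum t N
      = ∑ x ∈ factoredUpTo s M ×ˢ factoredUpTo t N, ((x.1 * x.2 : ℕ) : ℝ)⁻¹ := by
        simp only [Nat.cast_mul, mul_inv, reciprocalSum, sum_mul_sum, sum_product]
    _ = ∑ n ∈ factoredUpTo s M * factoredUpTo t N, (n : ℝ)⁻¹ :=
        (sum_image (f := fun n : ℕ => (n : ℝ)⁻¹) (injOn_mul_factoredUpTo hst M N)).symm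
    _ ≤ reciprocalSum (s ∪ t) (M * N) :=
        sum_le_sum_of_subset_of_nonneg (factoredUpTo_mul_subset_union s t M N)
          fun _ _ _ => by positivity

theorem cast_div_le_two_mul_natDiv {d n : ℕ} (hd : 0 < d) (hdn : d ≤ n) :
    (n : ℝ) / d ≤ 2 * (n / d : ℕ) := by
  have hquot : (1 : ℝ) ≤ (n / d : ℕ) := by exact_mod_cast Nat.div_pos hdn hd
  have hlt : (n : ℝ) / d < (n / d : ℕ) + 1 := by
    rw [← Nat.floor_div_eq_div (K := ℝ)]
    exact Nat.lt_floor_add_one _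
  linarith

theorem sum_vonMangoldt_mul_natDiv (N : ℕ) :
    ∑ d ∈ Ioc 0 N, Λ d * (N / d : ℕ) = ∑ n ∈ Ioc 0 N, Real.log n := by
  rw [← ArithmeticFunction.sum_Ioc_mul_zeta_eq_sum, ArithmeticFunction.vonMangoldt_mul_zeta]
  rfl

theorem sum_vonMangoldt_div_le (N : ℕ) : ∑ d ∈ Ioc 0 N, Λ d / d ≤ 2 * Real.log N := by
  rcases N.eq_zero_or_pos with rfl | hN
  · simp
  have hN0 : (0 : ℝ) < N := by exact_mod_cast hN
  refine le_of_mul_le_mul_left ?_ hN0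
  calc (N : ℝ) * ∑ d ∈ Ioc 0 N, Λ d / d
      = ∑ d ∈ Ioc 0 N, Λ d * (N / d) := by
        rw [mul_sum]
        exact sum_congr rfl fun d _ => by ring
    _ ≤ ∑ d ∈ Ioc 0 N, Λ d * (2 * (N / d : ℕ)) := by
        refine sum_le_sum fun d hd => ?_
        obtain ⟨hd0, hdN⟩ := mem_Ioc.1 hd
        exact mul_le_mul_of_nonneg_left (cast_div_le_two_mul_natDiv hd0 hdN)
          ArithmeticFunction.vonMangoldt_nonneg
    _ = 2 * ∑ n ∈ Ioc 0 N, Real.log n := by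
        rw [← sum_vonMangoldt_mul_natDiv, mul_sum]
        exact sum_congr rfl fun d _ => by ring
    _ ≤ 2 * ∑ _ ∈ Ioc 0 N, Real.log N := by
        gcongr with n hn
        · exact_mod_cast (mem_Ioc.1 hn).1
        · exact (mem_Ioc.1 hn).2
    _ = N * (2 * Real.log N) := by
        rw [sum_const, Nat.card_Ioc, nsmul_eq_mul, Nat.sub_zero]
        ring

theorem sum_primesLE_log_div_le (N : ℕ) : ∑ p ∈ N.primesLE, Real.log p / p ≤ 2 * Real.log N := by
  calc ∑ p ∈ N.primesLE, Real.log p / p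
      = ∑ p ∈ N.primesLE, Λ p / p :=
        sum_congr rfl fun p hp => by
          rw [ArithmeticFunction.vonMangoldt_apply_prime (Nat.mem_primesLE.1 hp).2]
    _ ≤ ∑ d ∈ Ioc 0 N, Λ d / d := by
        refine sum_le_sum_of_subset_of_nonneg (fun p hp => ?_) fun d _ _ =>
          div_nonneg ArithmeticFunction.vonMangoldt_nonneg d.cast_nonneg
        obtain ⟨hpN, hp⟩ := Nat.mem_primesLE.1 hp
        exact mem_Ioc.2 ⟨hp.pos, hpN⟩
    _ ≤ 2 * Real.log N := sum_vonMangoldt_div_le N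

theorem sub_one_mul_sum_factorization_div_le (s : Set ℕ) (N : ℕ) {p : ℕ} (hp : p.Prime) :
    (p - 1) * ∑ n ∈ factoredUpTo s N, (n.factorization p / n : ℝ) ≤ reciprocalSum s N := by
  set S := factoredUpTo s N
  set A := ∑ n ∈ S, (n.factorization p / n : ℝ)
  have hp0 : (0 : ℝ) < p := by exact_mod_cast hp.pos
  have hshift : ∀ m ∈ S, (((p * m).factorization p : ℝ) / (p * m : ℕ))
      = (m.factorization p / m + (m : ℝ)⁻¹) / p := by
    intro m hm
    have hm0 : m ≠ 0 := Nat.one_le_iff_ne_zero.1 (mem_factoredUpTo.1 hm).1.1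
    rw [Nat.factorization_mul hp.ne_zero hm0, Finsupp.add_apply, hp.factorization_self]
    push_cast
    field_simp
    ring
  have hrec : A ≤ (A + reciprocalSum s N) / p := by
    calc A = ∑ n ∈ S with p ∣ n, (n.factorization p / n : ℝ) := by
          refine (sum_filter_of_ne fun n _ hn => ?_).symm
          by_contra hpn
          simp [Nat.factorization_eq_zero_of_not_dvd hpn] at hn
      _ ≤ ∑ n ∈ S.image (p * ·), (n.factorization p / n : ℝ) :=
          sum_le_sum_of_subset_of_nonneg (factoredUpTo_filter_dvd_subset_image s N p)
            fun _ _ _ => by positivity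
      _ ≤ ∑ m ∈ S, ((p * m).factorization p / (p * m : ℕ) : ℝ) :=
          sum_image_le_of_nonneg fun _ _ => by positivity
      _ = (A + reciprocalSum s N) / p := by
          rw [sum_congr rfl hshift, ← sum_div, sum_add_distrib, reciprocalSum]
  rw [le_div_iff₀ hp0] at hrec
  linarith

theorem sum_factorization_div_le (s : Set ℕ) (N : ℕ) {p : ℕ} (hp : p.Prime) :
    ∑ n ∈ factoredUpTo s N, (n.factorization p / n : ℝ) ≤ 2 / p * reciprocalSum s N := by
  have hp2 : (2 : ℝ) ≤ p := by exact_mod_cast hp.two_le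
  have hA : 0 ≤ ∑ n ∈ factoredUpTo s N, (n.factorization p / n : ℝ) :=
    sum_nonneg fun _ _ => by positivity
  rw [div_mul_eq_mul_div, le_div_iff₀ (by linarith)]
  nlinarith [sub_one_mul_sum_factorization_div_le s N hp]

theorem log_eq_sum_primesLE {n B : ℕ} (hn : (n.primeFactors : Set ℕ) ⊆ Set.Iic B) :
    Real.log n = ∑ p ∈ B.primesLE, n.factorization p * Real.log p := by
  rw [Real.log_nat_eq_sum_factorization]
  refine Finsupp.sum_of_support_subset _ (fun p hp => ?_) _ fun _ _ => by simp
  rw [Nat.support_factorization] at hp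
  exact Nat.mem_primesLE.2 ⟨hn hp, Nat.prime_of_mem_primeFactors hp⟩

theorem sum_log_div_factoredUpTo_Iic_le (B N : ℕ) :
    ∑ n ∈ factoredUpTo (Set.Iic B) N, Real.log n / n
      ≤ 4 * Real.log B * reciprocalSum (Set.Iic B) N := by
  set S := factoredUpTo (Set.Iic B) N
  set T := reciprocalSum (Set.Iic B) N
  have hT : 0 ≤ T := reciprocalSum_nonneg _ _
  calc ∑ n ∈ S, Real.log n / n
      = ∑ n ∈ S, ∑ p ∈ B.primesLE, Real.log p * (n.factorization p / n) := by
        refine sum_congr rfl fun n hn => ?_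
        rw [log_eq_sum_primesLE (mem_factoredUpTo.1 hn).2, sum_div]
        exact sum_congr rfl fun p _ => by ring
    _ = ∑ p ∈ B.primesLE, Real.log p * ∑ n ∈ S, (n.factorization p / n : ℝ) := by
        rw [sum_comm]
        simp only [mul_sum]
    _ ≤ ∑ p ∈ B.primesLE, Real.log p * (2 / p * T) := by
        refine sum_le_sum fun p hp => mul_le_mul_of_nonneg_left ?_ (Real.log_natCast_nonneg p)
        exact sum_factorization_div_le _ N (Nat.mem_primesLE.1 hp).2
    _ = 2 * T * ∑ p ∈ B.primesLE, Real.log p / p := by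
        rw [mul_sum]
        exact sum_congr rfl fun p _ => by ring
    _ ≤ 2 * T * (2 * Real.log B) := by
        gcongr
        exact sum_primesLE_log_div_le B
    _ = 4 * Real.log B * T := by ring

theorem sum_inv_le_add_sum_log_div {S : Finset ℕ} (hS : 0 ∉ S) {D : ℝ} (hD : 0 < D) :
    ∑ n ∈ S, (n : ℝ)⁻¹ ≤ 1 + D + (∑ n ∈ S, Real.log n / n) / D := by
  have hsmall : ∑ n ∈ S with Real.log (n : ℕ) ≤ D, (n : ℝ)⁻¹ ≤ 1 + D := by
    calc ∑ n ∈ S with Real.log (n : ℕ) ≤ D, (n : ℝ)⁻¹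
        ≤ ∑ n ∈ Icc 1 ⌊Real.exp D⌋₊, (n : ℝ)⁻¹ := by
          refine sum_le_sum_of_subset_of_nonneg (fun n hn => ?_) fun _ _ _ => by positivity
          obtain ⟨hnS, hnD⟩ := mem_filter.1 hn
          have hn0 : 0 < n := Nat.pos_of_ne_zero (ne_of_mem_of_not_mem hnS hS)
          have hn_exp := (Real.log_le_iff_le_exp (by exact_mod_cast hn0)).1 hnD
          exact mem_Icc.2 ⟨hn0, Nat.le_floor hn_exp⟩
      _ = harmonic ⌊Real.exp D⌋₊ := (cast_harmonic_eq_sum_Icc _).symm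
      _ ≤ 1 + D := by
          simpa using harmonic_floor_le_one_add_log (Real.exp D) (Real.one_le_exp hD.le)
  have hlarge : ∑ n ∈ S with ¬ Real.log (n : ℕ) ≤ D, (n : ℝ)⁻¹
      ≤ (∑ n ∈ S, Real.log n / n) / D := by
    rw [sum_div]
    refine (sum_le_sum fun n hn => ?_).trans
      (sum_le_sum_of_subset_of_nonneg (filter_subset _ S) fun n _ _ => ?_)
    · have hnD : D ≤ Real.log n := (not_le.1 (mem_filter.1 hn).2).le
      rw [le_div_iff₀ hD, mul_comm, ← div_eq_mul_inv]
      gcongr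
    · have := Real.log_natCast_nonneg n
      positivity
  rw [← sum_filter_add_sum_filter_not S (fun n : ℕ => Real.log n ≤ D)]
  linarith

theorem half_lt_log_natCast {n : ℕ} (hn : 2 ≤ n) : 1 / 2 < Real.log n := by
  have : Real.log 2 ≤ Real.log n := Real.log_le_log two_pos (by exact_mod_cast hn)
  linarith [Real.log_two_gt_d9]

theorem reciprocalSum_Iic_le {B : ℕ} (hB : 2 ≤ B) (N : ℕ) :
    reciprocalSum (Set.Iic B) N ≤ 20 * Real.log B := by
  have hlogB := half_lt_log_natCast hB
  have hS : 0 ∉ factoredUpTo (Set.Iic B) N := fun h => by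
    simpa using (mem_factoredUpTo.1 h).1.1
  -- The mean of `log n` with weights `1 / n` is at most `4 log B`, so at least half of the total
  -- weight sits on `n ≤ B ^ 8`.
  have hmarkov : reciprocalSum (Set.Iic B) N
      ≤ 1 + 8 * Real.log B + 4 * Real.log B * reciprocalSum (Set.Iic B) N / (8 * Real.log B) := by
    refine (sum_inv_le_add_sum_log_div hS (by positivity : 0 < 8 * Real.log B)).trans ?_
    gcongr
    exact sum_log_div_factoredUpTo_Iic_le B N
  have hhalf : 4 * Real.log B * reciprocalSum (Set.Iic B) N / (8 * Real.log B)
      = reciprocalSum (Set.Iic B) N / 2 := by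
    field_simp
    ring
  linarith

theorem sum_filter_dvd_vonMangoldt_div_le {S : Finset ℕ} (hS : S ⊆ Icc 1 N) {m : ℕ} (hm : 0 < m) :
    ∑ n ∈ S with m ∣ n, Λ (n / m) ≤ 6 * (N * (m : ℝ)⁻¹) := by
  have hlog4 : Real.log 4 ≤ 2 := by
    rw [show (4 : ℝ) = 2 ^ 2 by norm_num, Real.log_pow]
    push_cast
    linarith [Real.log_two_lt_d9]
  calc ∑ n ∈ S with m ∣ n, Λ (n / m)
      ≤ ∑ n ∈ (Ioc 0 (N / m)).image (m * ·), Λ (n / m) := by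
        refine sum_le_sum_of_subset_of_nonneg (fun n hn => ?_) fun _ _ _ =>
          ArithmeticFunction.vonMangoldt_nonneg
        obtain ⟨hnS, d, rfl⟩ := mem_filter.1 hn
        obtain ⟨h1, hN⟩ := mem_Icc.1 (hS hnS)
        refine mem_image_of_mem _ (mem_Ioc.2 ⟨Nat.pos_of_mul_pos_left h1, ?_⟩)
        rwa [Nat.le_div_iff_mul_le hm, mul_comm]
    _ ≤ ∑ d ∈ Ioc 0 (N / m), Λ (m * d / m) :=
        sum_image_le_of_nonneg fun _ _ => ArithmeticFunction.vonMangoldt_nonneg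
    _ = Chebyshev.psi (N / m) := by
        simp only [Nat.mul_div_cancel_left _ hm, Chebyshev.psi, Nat.floor_div_eq_div]
    _ ≤ (Real.log 4 + 4) * (N / m) := Chebyshev.psi_le_const_mul_self (by positivity)
    _ ≤ 6 * (N * (m : ℝ)⁻¹) := by
        rw [← div_eq_mul_inv]
        gcongr
        linarith

theorem sum_log_factoredUpTo_le (s : Set ℕ) (N : ℕ) :
    ∑ n ∈ factoredUpTo s N, Real.log n ≤ 6 * N * reciprocalSum s N := by
  set S := factoredUpTo s N
  calc ∑ n ∈ S, Real.log n
      = ∑ n ∈ S, ∑ m ∈ n.divisors, Λ (n / m) := by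
        refine sum_congr rfl fun n _ => ?_
        rw [Nat.sum_div_divisors, ArithmeticFunction.vonMangoldt_sum]
    _ = ∑ m ∈ S, ∑ n ∈ S with m ∣ n, Λ (n / m) := by
        refine sum_comm' fun n m => ?_
        rw [mem_filter, Nat.mem_divisors]
        constructor
        · rintro ⟨hn, hmn, -⟩
          exact ⟨⟨hn, hmn⟩, mem_factoredUpTo_of_dvd hn hmn⟩
        · rintro ⟨⟨hn, hmn⟩, -⟩
          exact ⟨hn, hmn, Nat.one_le_iff_ne_zero.1 (mem_factoredUpTo.1 hn).1.1⟩
    _ ≤ ∑ m ∈ S, 6 * (N * (m : ℝ)⁻¹) := sum_le_sum fun m hm =>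
        sum_filter_dvd_vonMangoldt_div_le (factoredUpTo_subset_Icc s N) (mem_factoredUpTo.1 hm).1.1
    _ = 6 * N * reciprocalSum s N := by
        rw [← mul_sum, ← mul_sum, mul_assoc, reciprocalSum]

theorem card_factoredUpTo_mul_log_le (s : Set ℕ) (N : ℕ) :
    #(factoredUpTo s N) * Real.log N ≤ 7 * N * reciprocalSum s N := by
  have hdefect : ∑ n ∈ factoredUpTo s N, (Real.log N - Real.log n) ≤ N * reciprocalSum s N := by
    rw [reciprocalSum, mul_sum]
    refine sum_le_sum fun n hn => ?_
    obtain ⟨⟨hn1, hnN⟩, -⟩ := mem_factoredUpTo.1 hn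
    have hn0 : (0 : ℝ) < n := by exact_mod_cast hn1
    have hN0 : (0 : ℝ) < N := by exact_mod_cast hn1.trans hnN
    rw [← Real.log_div hN0.ne' hn0.ne', ← div_eq_mul_inv]
    exact Real.log_le_self (by positivity)
  rw [sum_sub_distrib, sum_const, nsmul_eq_mul] at hdefect
  linarith [sum_log_factoredUpTo_le s N]

theorem reciprocalSum_compl_mul_le (s : Set ℕ) (hN : 2 ≤ N) :
    reciprocalSum sᶜ N * reciprocalSum s N ≤ 4 * Real.log N := by
  have hlogN := half_lt_log_natCast hN
  have hN0 : (N : ℝ) ≠ 0 := by positivity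
  calc reciprocalSum sᶜ N * reciprocalSum s N
      ≤ reciprocalSum (sᶜ ∪ s) (N * N) := reciprocalSum_mul_le_union disjoint_compl_left N N
    _ ≤ harmonic (N * N) := reciprocalSum_le_harmonic _ _
    _ ≤ 1 + Real.log (N * N : ℕ) := harmonic_le_one_add_log _
    _ = 1 + 2 * Real.log N := by rw [Nat.cast_mul, Real.log_mul hN0 hN0, two_mul]
    _ ≤ 4 * Real.log N := by linarith

theorem card_factoredUpTo_compl_mul_reciprocalSum_le (s : Set ℕ) (hN : 2 ≤ N) :
    #(factoredUpTo sᶜ N) * reciprocalSum s N ≤ 28 * N := by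
  have hlogN : 0 < Real.log N := one_half_pos.trans (half_lt_log_natCast hN)
  refine le_of_mul_le_mul_right ?_ hlogN
  calc #(factoredUpTo sᶜ N) * reciprocalSum s N * Real.log N
      = #(factoredUpTo sᶜ N) * Real.log N * reciprocalSum s N := by ring
    _ ≤ 7 * N * reciprocalSum sᶜ N * reciprocalSum s N :=
        mul_le_mul_of_nonneg_right (card_factoredUpTo_mul_log_le sᶜ N) (reciprocalSum_nonneg s N)
    _ = 7 * N * (reciprocalSum sᶜ N * reciprocalSum s N) := mul_assoc ..
    _ ≤ 7 * N * (4 * Real.log N) :=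
        mul_le_mul_of_nonneg_left (reciprocalSum_compl_mul_le s hN) (by positivity)
    _ = 28 * N * Real.log N := by ring

theorem log_le_mul_reciprocalSum_Ioc {A B : ℕ} (hA : 2 ≤ A) (hBN : B ≤ N) :
    Real.log B ≤ 20 * Real.log A * reciprocalSum (Set.Ioc A B) N := by
  have hcover : Set.Icc 1 B ⊆ Set.Iic A ∪ Set.Ioc A B := fun n hn =>
    (le_or_gt n A).imp id fun h => ⟨h, hn.2⟩
  calc Real.log B ≤ harmonic B := by
        simpa using log_le_harmonic_floor (B : ℝ) B.cast_nonneg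
    _ ≤ reciprocalSum (Set.Iic A ∪ Set.Ioc A B) N := harmonic_le_reciprocalSum hBN hcover
    _ ≤ reciprocalSum (Set.Iic A) N * reciprocalSum (Set.Ioc A B) N :=
        reciprocalSum_union_le_mul _ _ N
    _ ≤ 20 * Real.log A * reciprocalSum (Set.Ioc A B) N :=
        mul_le_mul_of_nonneg_right (reciprocalSum_Iic_le hA N) (reciprocalSum_nonneg _ N)

theorem card_factoredUpTo_compl_Ioc_mul_log_le {A B : ℕ} (hA : 2 ≤ A) (hN : 2 ≤ N) (hBN : B ≤ N) :
    #(factoredUpTo (Set.Ioc A B)ᶜ N) * Real.log B ≤ 560 * Real.log A * N := by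
  have hlogA : 0 < Real.log A := one_half_pos.trans (half_lt_log_natCast hA)
  set c := (#(factoredUpTo (Set.Ioc A B)ᶜ N) : ℝ)
  calc c * Real.log B
      ≤ c * (20 * Real.log A * reciprocalSum (Set.Ioc A B) N) := by
        gcongr
        exact log_le_mul_reciprocalSum_Ioc hA hBN
    _ = 20 * Real.log A * (c * reciprocalSum (Set.Ioc A B) N) := by ring
    _ ≤ 20 * Real.log A * (28 * N) :=
        mul_le_mul_of_nonneg_left (card_factoredUpTo_compl_mul_reciprocalSum_le _ hN)
          (by positivity)
    _ = 560 * Real.log A * N := by ring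

theorem two_le_natFloor {x : ℝ} (hx : 2 ≤ x) : 2 ≤ ⌊x⌋₊ :=
  Nat.le_floor (by exact_mod_cast hx)

theorem log_le_two_mul_log_floor {x : ℝ} (hx : 2 ≤ x) : Real.log x ≤ 2 * Real.log ⌊x⌋₊ := by
  have hfloor : (2 : ℝ) ≤ ⌊x⌋₊ := by exact_mod_cast two_le_natFloor hx
  rw [← Nat.cast_two, ← Real.log_pow]
  exact Real.log_le_log (by linarith) (by nlinarith [Nat.lt_floor_add_one x])

theorem card_factoredUpTo_compl_preimage_Ioc_le {P Q X : ℝ} (hP : 2 ≤ P) (hQ : 2 ≤ Q)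
    (hQX : Q ≤ X) :
    #(factoredUpTo ((Nat.cast : ℕ → ℝ) ⁻¹' Set.Ioc P Q)ᶜ ⌊X⌋₊)
      ≤ 1120 * (Real.log P / Real.log Q * X) := by
  have hX : 0 ≤ X := by linarith
  have hlogP : 0 ≤ Real.log P := Real.log_nonneg (by linarith)
  have hlogQ : 0 < Real.log Q := Real.log_pos (by linarith)
  have hfloorP : (0 : ℝ) < ⌊P⌋₊ := by exact_mod_cast two_pos.trans_le (two_le_natFloor hP)
  rw [Nat.preimage_Ioc (by linarith) (by linarith), ← mul_assoc, mul_div_assoc', div_mul_eq_mul_div,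
    le_div_iff₀ hlogQ]
  set c := (#(factoredUpTo (Set.Ioc ⌊P⌋₊ ⌊Q⌋₊)ᶜ ⌊X⌋₊) : ℝ)
  calc c * Real.log Q ≤ c * (2 * Real.log ⌊Q⌋₊) := by
        gcongr
        exact log_le_two_mul_log_floor hQ
    _ = 2 * (c * Real.log ⌊Q⌋₊) := by ring
    _ ≤ 2 * (560 * Real.log ⌊P⌋₊ * ⌊X⌋₊) :=
        mul_le_mul_of_nonneg_left (card_factoredUpTo_compl_Ioc_mul_log_le (two_le_natFloor hP)
          (two_le_natFloor (hQ.trans hQX)) (Nat.floor_mono hQX)) zero_le_two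
    _ ≤ 2 * (560 * Real.log P * X) := by
        gcongr
        · exact Nat.floor_le (by linarith)
        · exact Nat.floor_le hX
    _ = 1120 * Real.log P * X := by ring

theorem log_Pseq_div_log_Qseq (P₁ : ℝ) {Q₁ : ℝ} (hQ : Real.log Q₁ ≠ 0) {j : ℕ} (hj : 1 ≤ j) :
    Real.log (Pseq P₁ Q₁ j) / Real.log (Qseq Q₁ j)
      = Real.log P₁ / Real.log Q₁ * ((j : ℝ) ^ 2)⁻¹ := by
  obtain ⟨i, rfl⟩ := Nat.exists_eq_add_of_le' hj
  rw [Pseq, Qseq, Real.log_exp, Real.log_exp, Nat.add_sub_cancel, pow_add, pow_succ (Real.log Q₁)]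
  field_simp

theorem sum_Icc_inv_sq_le_two (n : ℕ) : ∑ j ∈ Icc 1 n, ((j : ℝ) ^ 2)⁻¹ ≤ 2 := by
  have h := sum_Ioo_inv_sq_le (α := ℝ) 0 (n + 1)
  have hI : Ioo 0 (n + 1) = Icc 1 n := by
    ext
    simp only [mem_Ioo, mem_Icc]
    lia
  rw [hI] at h
  simpa using h

theorem sum_log_Pseq_div_log_Qseq_le {P₁ Q₁ : ℝ} (hP : 0 ≤ Real.log P₁) (hQ : 0 < Real.log Q₁)
    (n : ℕ) :
    ∑ j ∈ Icc 1 n, Real.log (Pseq P₁ Q₁ j) / Real.log (Qseq Q₁ j)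
      ≤ 2 * (Real.log P₁ / Real.log Q₁) := by
  rw [sum_congr rfl fun j hj => log_Pseq_div_log_Qseq P₁ hQ.ne' (mem_Icc.1 hj).1, ← mul_sum,
    mul_comm]
  gcongr
  exact sum_Icc_inv_sq_le_two n

theorem le_Pseq {P₁ Q₁ : ℝ} (hP : 1 ≤ P₁) (hQ : 1 ≤ Real.log Q₁) {j : ℕ} (hj : 1 ≤ j) :
    P₁ ≤ Pseq P₁ Q₁ j := by
  have hj' : (1 : ℝ) ≤ j := by exact_mod_cast hj
  rw [Pseq, ← Real.log_le_iff_le_exp (by linarith)]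
  exact le_mul_of_one_le_left (Real.log_nonneg hP)
    (one_le_mul_of_one_le_of_one_le (one_le_pow₀ hj') (one_le_pow₀ hQ))

theorem Qseq_zero (Q₁ : ℝ) : Qseq Q₁ 0 = 1 := by
  simp [Qseq]

theorem Qseq_one {Q₁ : ℝ} (hQ : 0 < Q₁) : Qseq Q₁ 1 = Q₁ := by
  simp [Qseq, Real.exp_log hQ]

theorem Qseq_mono {Q₁ : ℝ} (hQ : 1 ≤ Real.log Q₁) : Monotone (Qseq Q₁) := by
  refine monotone_nat_of_le_succ fun j => ?_
  have hpow : (j : ℝ) ^ (4 * j + 2) ≤ ((j + 1 : ℕ) : ℝ) ^ (4 * (j + 1) + 2) := by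
    exact_mod_cast (Nat.pow_le_pow_left j.le_succ _).trans
      (Nat.pow_le_pow_right j.succ_pos (by lia))
  unfold Qseq
  gcongr
  exact j.le_succ

/-- Holds even when the set defining `Jmax` is unbounded, since then `Jmax Q₁ X = 0`. -/
theorem Qseq_Jmax_le (Q₁ X : ℝ) : Qseq Q₁ (Jmax Q₁ X) ≤ Real.exp √(Real.log X / 2) := by
  set A := {j : ℕ | Qseq Q₁ j ≤ Real.exp √(Real.log X / 2)}
  have hzero : 0 ∈ A := (Qseq_zero Q₁).trans_le (Real.one_le_exp (Real.sqrt_nonneg _))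
  change sSup A ∈ A
  by_cases hA : BddAbove A
  · exact Nat.sSup_mem ⟨0, hzero⟩ hA
  · rwa [Nat.sSup_of_not_bddAbove hA]

theorem Qseq_le_of_le_Jmax {Q₁ X : ℝ} (hQ : 1 ≤ Real.log Q₁) (hQX : Q₁ ≤ X) (hQ₁ : 0 < Q₁)
    {j : ℕ} (hj : j ≤ Jmax Q₁ X) : Qseq Q₁ j ≤ X := by
  have hX : 1 ≤ Real.log X := hQ.trans (Real.log_le_log hQ₁ hQX)
  calc Qseq Q₁ j ≤ Qseq Q₁ (Jmax Q₁ X) := Qseq_mono hQ hj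
    _ ≤ Real.exp √(Real.log X / 2) := Qseq_Jmax_le Q₁ X
    _ ≤ Real.exp (Real.log X) := by
        gcongr
        rw [Real.sqrt_le_left (by linarith)]
        nlinarith
    _ = X := Real.exp_log (hQ₁.trans_le hQX)

open scoped Classical in
theorem filter_not_memS_subset (P₁ Q₁ X : ℝ) (N : ℕ) :
    {n ∈ Icc 1 N | ¬ memS P₁ Q₁ X n} ⊆ (Icc 1 (Jmax Q₁ X)).biUnion fun j =>
      factoredUpTo ((Nat.cast : ℕ → ℝ) ⁻¹' Set.Ioc (Pseq P₁ Q₁ j) (Qseq Q₁ j))ᶜ N := by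
  intro n hn
  obtain ⟨hnN, hnS⟩ := mem_filter.1 hn
  rw [mem_Icc] at hnN
  rw [memS, not_and] at hnS
  push Not at hnS
  obtain ⟨j, hj, hfree⟩ := hnS hnN.1
  refine mem_biUnion.2 ⟨j, hj, mem_factoredUpTo.2 ⟨hnN, fun p hp hpPQ => ?_⟩⟩
  exact (hfree p (Nat.prime_of_mem_primeFactors hp) (Nat.dvd_of_mem_primeFactors hp)
    hpPQ.1.le).not_ge hpPQ.2

open scoped Classical in
theorem card_filter_not_memS_le {P₁ Q₁ X : ℝ} (hP : 2 ≤ P₁) (hQ : Real.exp 1 ≤ Q₁)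
    (hQX : Q₁ ≤ X) :
    #{n ∈ Icc 1 ⌊X⌋₊ | ¬ memS P₁ Q₁ X n}
      ≤ 1120 * ((∑ j ∈ Icc 1 (Jmax Q₁ X),
          Real.log (Pseq P₁ Q₁ j) / Real.log (Qseq Q₁ j)) * X) := by
  have hQ0 : 0 < Q₁ := (Real.exp_pos 1).trans_le hQ
  have hlogQ : 1 ≤ Real.log Q₁ := (Real.le_log_iff_exp_le hQ0).2 hQ
  have hQ2 : 2 ≤ Q₁ := by linarith [Real.exp_one_gt_d9]
  have hunion := (card_le_card (filter_not_memS_subset P₁ Q₁ X ⌊X⌋₊)).trans card_biUnion_le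
  refine (Nat.cast_le.2 hunion).trans ?_
  rw [Nat.cast_sum, sum_mul, mul_sum]
  refine sum_le_sum fun j hj => ?_
  obtain ⟨hj1, hjJ⟩ := mem_Icc.1 hj
  have hPj : 2 ≤ Pseq P₁ Q₁ j := hP.trans (le_Pseq (by linarith) hlogQ hj1)
  have hQj : 2 ≤ Qseq Q₁ j := by
    rw [← Qseq_one hQ0] at hQ2
    exact hQ2.trans (Qseq_mono hlogQ hj1)
  exact card_factoredUpTo_compl_preimage_Ioc_le hPj hQj (Qseq_le_of_le_Jmax hlogQ hQX hQ0 hjJ)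

open scoped Classical in
/-- **Equation (2.1): the fundamental lemma bound for the complement of `S`.**
For `10 < P₁ < Q₁ ≤ X`, the complement `S^c` of `S_{P₁,Q₁,X}` in `[1,X] ∩ ℕ`
satisfies `|S^c| ≪ ∑_{j ≤ J} (log P_j)/(log Q_j)·X ≪ (log P₁)/(log Q₁)·X`,
with absolute implied constants. -/
theorem complement_of_S_bound :
    ∃ K : ℝ, 0 < K ∧ ∀ P₁ Q₁ X : ℝ, 10 < P₁ → P₁ < Q₁ → Q₁ ≤ X →
      ((((Icc 1 ⌊X⌋₊).filter (fun n => ¬ memS P₁ Q₁ X n)).card : ℝ)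
        ≤ K * ((∑ j ∈ Icc 1 (Jmax Q₁ X),
            Real.log (Pseq P₁ Q₁ j) / Real.log (Qseq Q₁ j)) * X)) ∧
      ((∑ j ∈ Icc 1 (Jmax Q₁ X),
          Real.log (Pseq P₁ Q₁ j) / Real.log (Qseq Q₁ j)) * X
        ≤ K * (Real.log P₁ / Real.log Q₁ * X)) := by
  refine ⟨1120, by norm_num, fun P₁ Q₁ X hP hPQ hQX => ?_⟩
  have hlogP : 0 ≤ Real.log P₁ := Real.log_nonneg (by linarith)
  have hlogQ : 0 < Real.log Q₁ := Real.log_pos (by linarith)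
  have hexp : Real.exp 1 ≤ Q₁ := by linarith [Real.exp_one_lt_d9]
  have hX : 0 ≤ X := by linarith
  refine ⟨card_filter_not_memS_le (by linarith) hexp hQX, ?_⟩
  calc (∑ j ∈ Icc 1 (Jmax Q₁ X), Real.log (Pseq P₁ Q₁ j) / Real.log (Qseq Q₁ j)) * X
      ≤ 2 * (Real.log P₁ / Real.log Q₁) * X := by
        gcongr
        exact sum_log_Pseq_div_log_Qseq_le hlogP hlogQ _
    _ ≤ 1120 * (Real.log P₁ / Real.log Q₁) * X := by
        gcongr
        norm_num
    _ = 1120 * (Real.log P₁ / Real.log Q₁ * X) := mul_assoc ..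
end

section
/- Let k ≥ m ≥ 1 and A ≥ 1 be fixed. Then Σ_{h ∈ ([0,H] ∩ Z)^m} sup_{L_1,…,L_k} 𝔖({L_1(h),…,L_k(h)}) ≪_{k,A} H^m, where the supremum ranges over all k-tuples of affine-linear forms L_j(h_1,…,h_m) = a_j + Σ_{i=1}^m a_{i,j} h_i with integer coefficients satisfying |a_{i,j}|, |a_j| ≤ A. -/
open Finset

/-- `ν_p(𝓗)`: the number of distinct residue classes modulo `p` occupied by the
integers `h 0, …, h (k-1)`. -/
def nuP {k : ℕ} (h : Fin k → ℤ) (p : ℕ) : ℕ :=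
  (Finset.image (fun i => ((h i : ZMod p))) Finset.univ).card

/-- The singular series `𝔖(𝓗) = ∏_p (1 − ν_p(𝓗)/p)·(1 − 1/p)^{−k}`,
the product running over all primes (with `k` the number of forms). -/
noncomputable def singSeries {k : ℕ} (h : Fin k → ℤ) : ℝ :=
  ∏' p : Nat.Primes, ((1 - (nuP h p : ℝ) / (p : ℝ)) * (1 - 1 / (p : ℝ)) ^ (-(k : ℤ)))

/-! The local factor of `𝔖(v)` at `p` is at most `1` unless `p` divides some difference
`v i - v j` with `i ≠ j`, and it never exceeds `(1 - 1/p)⁻ᵏ`. Hence, when the `v i` are distinct,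
`𝔖(v) ≤ (Δ / φ(Δ))ᵏ` with `Δ = ∏_{i ≠ j} |v i - v j|`. If `v j = L_j(h)`, each difference is the
value at `h` of one of finitely many affine forms `Q`, so the supremum over the `L_j` is at most a
sum over `Q` of a fixed power of `|Q(h)| / φ(|Q(h)|)`. It remains to average each of these over `h`:
a nonconstant `Q` takes `O(H)` values, each at `O(H^(m-1))` points, and all moments of `n / φ(n)`
are bounded on average.
-/

section FiniteSums

variable {α β : Type*}

lemma one_add_sum_le_prod_one_add (s : Finset α) {g : α → ℝ} (hg : ∀ i, 0 ≤ g i) :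
    1 + ∑ i ∈ s, g i ≤ ∏ i ∈ s, (1 + g i) := by
  classical
  induction s using Finset.induction_on with
  | empty => simp
  | insert i s hi ih =>
    rw [sum_insert hi, prod_insert hi]
    nlinarith [mul_le_mul_of_nonneg_left ih (by linarith [hg i] : 0 ≤ 1 + g i),
      mul_nonneg (hg i) (sum_nonneg fun j (_ : j ∈ s) => hg j)]

lemma prod_comp_le_sum_pow_card {s : Finset α} {t : Finset β} {g : α → β} {w : β → ℝ}
    (ht : t.Nonempty) (hg : ∀ a ∈ s, g a ∈ t) (hw : ∀ b, 0 ≤ w b) :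
    ∏ a ∈ s, w (g a) ≤ ∑ b ∈ t, w b ^ #s := by
  obtain ⟨b₀, hb₀, hmax⟩ := t.exists_max_image w ht
  calc ∏ a ∈ s, w (g a) ≤ ∏ _a ∈ s, w b₀ :=
        prod_le_prod (fun a _ => hw (g a)) fun a ha => hmax (g a) (hg a ha)
    _ = w b₀ ^ #s := prod_const (w b₀)
    _ ≤ ∑ b ∈ t, w b ^ #s := single_le_sum (fun b _ => pow_nonneg (hw b) #s) hb₀

lemma sum_comp_le_mul_sum_of_card_fiber_le [DecidableEq β] {s : Finset α} {t : Finset β}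
    {g : α → β} {f : β → ℝ} {C : ℕ} (hf : ∀ b, 0 ≤ f b) (hg : ∀ a ∈ s, g a ∈ t)
    (hC : ∀ b, #{a ∈ s | g a = b} ≤ C) :
    ∑ a ∈ s, f (g a) ≤ C * ∑ b ∈ t, f b := by
  rw [← sum_fiberwise_of_maps_to' hg, mul_sum]
  refine sum_le_sum fun b _ => ?_
  rw [sum_const, nsmul_eq_mul]
  exact mul_le_mul_of_nonneg_right (by exact_mod_cast hC b) (hf b)

lemma sum_Icc_natAbs_le {f : ℕ → ℝ} (hf : ∀ n, 0 ≤ f n) (N : ℕ) :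
    ∑ z ∈ Icc (-(N : ℤ)) N, f z.natAbs ≤ 2 * ∑ n ∈ range (N + 1), f n := by
  refine sum_comp_le_mul_sum_of_card_fiber_le (C := 2) hf (fun z hz => ?_) fun n => ?_
  · rw [mem_Icc] at hz
    rw [mem_range]
    lia
  · refine (card_le_card (t := {(n : ℤ), -(n : ℤ)}) fun z hz => ?_).trans card_le_two
    rw [mem_filter] at hz
    rw [mem_insert, mem_singleton]
    lia

end FiniteSums

section InfiniteProducts

variable {ι : Type*} {f g : ι → ℝ}

lemma prod_le_tprod_of_one_le (hf : Multipliable f) (h1 : ∀ i, 1 ≤ f i) (s : Finset ι) :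
    ∏ i ∈ s, f i ≤ ∏' i, f i :=
  Monotone.ge_of_tendsto (fun _ _ hst => prod_le_prod_of_subset_of_one_le hst
    (fun i _ => zero_le_one.trans (h1 i)) fun i _ _ => h1 i) hf.hasProd s

lemma summable_of_multipliable_of_one_add_le (hf : Multipliable f) (hf0 : ∀ i, f i ≠ 0)
    (hg : ∀ i, 0 ≤ g i) (hfg : ∀ᶠ i in Filter.cofinite, 1 + g i ≤ f i) : Summable g := by
  set F : ι → ℝ := fun i => max (f i) (1 + g i)
  have hF : Multipliable F :=
    hf.congr_cofinite₀ hf0 (hfg.mono fun i hi => (max_eq_left hi).symm)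
  have hgF : ∀ i, 1 + g i ≤ F i := fun i => le_max_right _ _
  refine summable_of_sum_le (c := ∏' i, F i) hg fun s => ?_
  calc ∑ i ∈ s, g i ≤ 1 + ∑ i ∈ s, g i := by linarith
    _ ≤ ∏ i ∈ s, (1 + g i) := one_add_sum_le_prod_one_add s hg
    _ ≤ ∏ i ∈ s, F i := prod_le_prod (fun i _ => by linarith [hg i]) fun i _ => hgF i
    _ ≤ ∏' i, F i := prod_le_tprod_of_one_le hF (fun i => by linarith [hg i, hgF i]) s

lemma tprod_le_prod_of_le_one_of_notMem {s : Finset ι} (hf : ∀ i, 0 ≤ f i)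
    (hg : ∀ i ∈ s, 1 ≤ g i) (hfg : ∀ i ∈ s, f i ≤ g i) (hf1 : ∀ i ∉ s, f i ≤ 1) :
    ∏' i, f i ≤ ∏ i ∈ s, g i := by
  classical
  by_cases hmul : Multipliable f
  · refine le_of_tendsto hmul.hasProd ((Filter.eventually_ge_atTop s).mono fun t hst => ?_)
    rw [← prod_sdiff hst]
    have hout : ∏ i ∈ t \ s, f i ≤ 1 :=
      prod_le_one (fun i _ => hf i) fun i hi => hf1 i (mem_sdiff.1 hi).2
    exact (mul_le_of_le_one_left (prod_nonneg fun i _ => hf i) hout).trans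
      (prod_le_prod (fun i _ => hf i) hfg)
  · rw [tprod_eq_one_of_not_multipliable hmul]
    exact one_le_prod hg

end InfiniteProducts

section EulerFactor

/-- The Euler factor `(1 - 1/p)⁻¹` of the zeta function at `s = 1`. -/
noncomputable def eulerFactor (p : ℕ) : ℝ := (1 - 1 / (p : ℝ))⁻¹

variable {p : ℕ}

lemma eulerFactor_eq_one_add (hp : 2 ≤ p) : eulerFactor p = 1 + 1 / ((p : ℝ) - 1) := by
  have hp' : (2 : ℝ) ≤ p := by exact_mod_cast hp
  have hp0 : (p : ℝ) ≠ 0 := by linarith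
  have hp1 : (p : ℝ) - 1 ≠ 0 := by linarith
  rw [eulerFactor, one_sub_div hp0, inv_div]
  field_simp
  ring

lemma one_add_one_div_le_eulerFactor (hp : 2 ≤ p) : 1 + 1 / (p : ℝ) ≤ eulerFactor p := by
  have hp' : (2 : ℝ) ≤ p := by exact_mod_cast hp
  rw [eulerFactor_eq_one_add hp]
  gcongr
  · linarith
  · linarith

lemma one_le_eulerFactor (hp : 2 ≤ p) : 1 ≤ eulerFactor p :=
  (le_add_of_nonneg_right (by positivity)).trans (one_add_one_div_le_eulerFactor hp)

lemma eulerFactor_le_one_add_two_div (hp : 2 ≤ p) : eulerFactor p ≤ 1 + 2 / p := by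
  have hp' : (2 : ℝ) ≤ p := by exact_mod_cast hp
  rw [eulerFactor_eq_one_add hp, add_le_add_iff_left, div_le_div_iff₀ (by linarith) (by linarith)]
  linarith

lemma one_add_pow_le_one_add_two_pow_mul {x : ℝ} (h0 : 0 ≤ x) (h1 : x ≤ 1) (n : ℕ) :
    (1 + x) ^ n ≤ 1 + 2 ^ n * x := by
  -- Convexity of `t ↦ tⁿ` on `[1, 2]`.
  have hconv := (convexOn_pow n).2 (x := (1 : ℝ)) (y := 2) (by simp) (by simp)
    (sub_nonneg.2 h1) h0 (by ring)
  simp only [smul_eq_mul, one_pow] at hconv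
  calc (1 + x) ^ n = ((1 - x) * 1 + x * 2) ^ n := by ring
    _ ≤ (1 - x) * 1 + x * 2 ^ n := hconv
    _ ≤ 1 + 2 ^ n * x := by linarith

lemma eulerFactor_pow_le (hp : 2 ≤ p) (n : ℕ) : eulerFactor p ^ n ≤ 1 + 2 ^ (n + 1) / p := by
  have hp' : (2 : ℝ) ≤ p := by exact_mod_cast hp
  have hx : 2 / (p : ℝ) ≤ 1 := (div_le_one (by linarith)).2 hp'
  calc eulerFactor p ^ n ≤ (1 + 2 / p) ^ n :=
        pow_le_pow_left₀ (zero_le_one.trans (one_le_eulerFactor hp))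
          (eulerFactor_le_one_add_two_div hp) n
    _ ≤ 1 + 2 ^ n * (2 / p) := one_add_pow_le_one_add_two_pow_mul (by positivity) hx n
    _ = 1 + 2 ^ (n + 1) / p := by ring

end EulerFactor

section EulerWeight

/-- The weight `n / φ(n) = ∏_{p ∣ n} (1 - 1/p)⁻¹`. The product form is the definition because it
gives the value `1` at `n = 0`, where `Nat.primeFactors` is empty and `n / φ(n)` would be `0`. -/
noncomputable def eulerWeight (n : ℕ) : ℝ := ∏ p ∈ n.primeFactors, eulerFactor p

lemma one_le_eulerFactor_of_mem_primeFactors {n p : ℕ} (hp : p ∈ n.primeFactors) :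
    1 ≤ eulerFactor p :=
  one_le_eulerFactor (Nat.prime_of_mem_primeFactors hp).two_le

lemma eulerWeight_zero : eulerWeight 0 = 1 := by
  rw [eulerWeight, Nat.primeFactors_zero, prod_empty]

lemma one_le_eulerWeight (n : ℕ) : 1 ≤ eulerWeight n :=
  one_le_prod fun _ => one_le_eulerFactor_of_mem_primeFactors

lemma eulerWeight_nonneg (n : ℕ) : 0 ≤ eulerWeight n :=
  zero_le_one.trans (one_le_eulerWeight n)

lemma eulerWeight_mul_le (a b : ℕ) : eulerWeight (a * b) ≤ eulerWeight a * eulerWeight b := by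
  rcases eq_or_ne a 0 with rfl | ha
  · rw [zero_mul, eulerWeight_zero, one_mul]
    exact one_le_eulerWeight b
  rcases eq_or_ne b 0 with rfl | hb
  · rw [mul_zero, eulerWeight_zero, mul_one]
    exact one_le_eulerWeight a
  have hinter : 1 ≤ ∏ p ∈ a.primeFactors ∩ b.primeFactors, eulerFactor p :=
    one_le_prod fun _ hp => one_le_eulerFactor_of_mem_primeFactors (mem_inter.1 hp).1
  have hunion : eulerWeight (a * b) = ∏ p ∈ a.primeFactors ∪ b.primeFactors, eulerFactor p := by
    rw [eulerWeight, Nat.primeFactors_mul ha hb]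
  calc eulerWeight (a * b)
      ≤ eulerWeight (a * b) * ∏ p ∈ a.primeFactors ∩ b.primeFactors, eulerFactor p :=
        le_mul_of_one_le_right (eulerWeight_nonneg _) hinter
    _ = eulerWeight a * eulerWeight b := by rw [hunion, prod_union_inter, eulerWeight, eulerWeight]

lemma eulerWeight_prod_le {α : Type*} (s : Finset α) (f : α → ℕ) :
    eulerWeight (∏ i ∈ s, f i) ≤ ∏ i ∈ s, eulerWeight (f i) :=
  le_prod_of_submultiplicative_of_nonneg _ eulerWeight_nonneg
    (by simp [eulerWeight]) eulerWeight_mul_le _ _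

lemma filter_prod_dvd_powerset_primesLE {n N : ℕ} (hn : n ≠ 0) (hnN : n ≤ N) :
    {S ∈ N.primesLE.powerset | ∏ p ∈ S, p ∣ n} = n.primeFactors.powerset := by
  ext S
  simp only [mem_filter, mem_powerset]
  constructor
  · rintro ⟨hS, hdvd⟩ p hp
    exact Nat.mem_primeFactors.2
      ⟨(Nat.mem_primesLE.1 (hS hp)).2, (dvd_prod_of_mem _ hp).trans hdvd, hn⟩
  · intro hS
    refine ⟨fun p hp => Nat.mem_primesLE.2 ⟨?_, Nat.prime_of_mem_primeFactors (hS hp)⟩,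
      (prod_dvd_prod_of_subset _ _ _ hS).trans (Nat.prod_primeFactors_dvd n)⟩
    exact (Nat.le_of_mem_primeFactors (hS hp)).trans hnN

lemma sum_prod_primeFactors_one_add_le {g : ℕ → ℝ} (hg : ∀ p, 0 ≤ g p) (N : ℕ) :
    ∑ n ∈ Ioc 0 N, ∏ p ∈ n.primeFactors, (1 + g p) ≤ N * ∏ p ∈ N.primesLE, (1 + g p / p) := by
  -- Expand the product over subsets `S` of the primes and count the multiples of `∏ p ∈ S, p`.
  have hexpand : ∀ n ∈ Ioc 0 N, ∏ p ∈ n.primeFactors, (1 + g p)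
      = ∑ S ∈ N.primesLE.powerset, if ∏ p ∈ S, p ∣ n then ∏ p ∈ S, g p else 0 := fun n hn => by
    rw [mem_Ioc] at hn
    rw [prod_one_add, ← filter_prod_dvd_powerset_primesLE hn.1.ne' hn.2, sum_filter]
  rw [sum_congr rfl hexpand, sum_comm, prod_one_add, mul_sum]
  refine sum_le_sum fun S _ => ?_
  calc ∑ n ∈ Ioc 0 N, (if ∏ p ∈ S, p ∣ n then ∏ p ∈ S, g p else 0)
      = ((N / ∏ p ∈ S, p : ℕ) : ℝ) * ∏ p ∈ S, g p := by
        rw [← sum_filter, sum_const, nsmul_eq_mul, Nat.Ioc_filter_dvd_card_eq_div]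
    _ ≤ N / ((∏ p ∈ S, p : ℕ) : ℝ) * ∏ p ∈ S, g p :=
        mul_le_mul_of_nonneg_right Nat.cast_div_le (prod_nonneg fun p _ => hg p)
    _ = N * ∏ p ∈ S, g p / p := by
        rw [Nat.cast_prod, prod_div_distrib, div_mul_eq_mul_div, mul_div_assoc]

lemma sum_Ioc_eulerWeight_pow_le (B N : ℕ) :
    ∑ n ∈ Ioc 0 N, eulerWeight n ^ B
      ≤ N * Real.exp (2 ^ (B + 1) * ∑' n : ℕ, 1 / (n : ℝ) ^ 2) := by
  have hsummable : Summable fun n : ℕ => 1 / (n : ℝ) ^ 2 :=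
    Real.summable_one_div_nat_pow.2 one_lt_two
  calc ∑ n ∈ Ioc 0 N, eulerWeight n ^ B
      ≤ ∑ n ∈ Ioc 0 N, ∏ p ∈ n.primeFactors, (1 + 2 ^ (B + 1) / (p : ℝ)) := by
        refine sum_le_sum fun n _ => ?_
        rw [eulerWeight, ← prod_pow]
        exact prod_le_prod
          (fun p hp => pow_nonneg (zero_le_one.trans (one_le_eulerFactor_of_mem_primeFactors hp)) B)
          fun p hp => eulerFactor_pow_le (Nat.prime_of_mem_primeFactors hp).two_le B
    _ ≤ N * ∏ p ∈ N.primesLE, (1 + 2 ^ (B + 1) / (p : ℝ) / p) :=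
        sum_prod_primeFactors_one_add_le (fun p => by positivity) N
    _ ≤ N * Real.exp (∑ p ∈ N.primesLE, 2 ^ (B + 1) / (p : ℝ) / p) := by
        gcongr
        exact Real.prod_one_add_le_exp_sum _ fun p => by positivity
    _ = N * Real.exp (2 ^ (B + 1) * ∑ p ∈ N.primesLE, 1 / (p : ℝ) ^ 2) := by
        rw [mul_sum]
        simp only [div_div, ← sq, mul_one_div]
    _ ≤ N * Real.exp (2 ^ (B + 1) * ∑' n : ℕ, 1 / (n : ℝ) ^ 2) := by
        gcongr
        exact hsummable.sum_le_tsum _ fun n _ => by positivity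

lemma exists_sum_eulerWeight_pow_le (B : ℕ) :
    ∃ K : ℝ, ∀ N : ℕ, ∑ n ∈ range (N + 1), eulerWeight n ^ B ≤ K * (N + 1) := by
  set E := Real.exp (2 ^ (B + 1) * ∑' n : ℕ, 1 / (n : ℝ) ^ 2)
  have hE : 1 ≤ E :=
    Real.one_le_exp (mul_nonneg (by positivity) (tsum_nonneg fun n => by positivity))
  refine ⟨E, fun N => ?_⟩
  have hrange : range (N + 1) = insert 0 (Ioc 0 N) := by
    ext n
    simp only [mem_range, mem_insert, mem_Ioc]
    lia
  rw [hrange, sum_insert (by simp), eulerWeight_zero, one_pow]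
  linarith [sum_Ioc_eulerWeight_pow_le B N]

end EulerWeight

section AffineForm

variable {ι : Type*} [Fintype ι]

/-- The value at `h` of the affine form with constant term `L.1` and linear coefficients `L.2`.
Forms are encoded as pairs so that they inherit the additive group structure of
`ℤ × (ι → ℤ)`. -/
def affineEval (L : ℤ × (ι → ℤ)) (h : ι → ℤ) : ℤ := L.1 + ∑ i, L.2 i * h i

/-- The sum of the absolute values of the coefficients of an affine form. -/
def affineHeight (L : ℤ × (ι → ℤ)) : ℕ := L.1.natAbs + ∑ i, (L.2 i).natAbs

lemma affineEval_sub (L L' : ℤ × (ι → ℤ)) (h : ι → ℤ) :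
    affineEval (L - L') h = affineEval L h - affineEval L' h := by
  simp only [affineEval, Prod.fst_sub, Prod.snd_sub, Pi.sub_apply, sub_mul, sum_sub_distrib]
  ring

lemma natAbs_affineEval_le (L : ℤ × (ι → ℤ)) {h : ι → ℤ} {N : ℕ} (hN : 1 ≤ N)
    (hh : ∀ i, (h i).natAbs ≤ N) : (affineEval L h).natAbs ≤ affineHeight L * N := by
  calc (affineEval L h).natAbs ≤ L.1.natAbs + ∑ i, (L.2 i * h i).natAbs :=
        (Int.natAbs_add_le _ _).trans (Nat.add_le_add_left (Int.natAbs_sum_le _ _) _)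
    _ ≤ L.1.natAbs * N + ∑ i, (L.2 i).natAbs * N := by
        refine add_le_add (Nat.le_mul_of_pos_right _ hN) (sum_le_sum fun i _ => ?_)
        rw [Int.natAbs_mul]
        exact Nat.mul_le_mul_left _ (hh i)
    _ = affineHeight L * N := by rw [affineHeight, add_mul, sum_mul]

variable [DecidableEq ι]

lemma card_filter_affineEval_eq_le (L : ℤ × (ι → ℤ)) {i₀ : ι} (hi₀ : L.2 i₀ ≠ 0)
    (s : Finset ℤ) (b : ℤ) :
    #{h ∈ Fintype.piFinset fun _ : ι => s | affineEval L h = b} ≤ #s ^ (Fintype.card ι - 1) := by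
  have hcard : #(Fintype.piFinset fun _ : {i // i ≠ i₀} => s) = #s ^ (Fintype.card ι - 1) := by
    simp
  rw [← hcard]
  -- The other coordinates of a solution determine the `i₀`-th one.
  refine card_le_card_of_injOn (fun h i => h i) (fun h hh => ?_) fun h hh h' hh' heq => ?_
  · exact Fintype.mem_piFinset.2 fun i => Fintype.mem_piFinset.1 (mem_filter.1 hh).1 i
  · have hrest : ∀ i ≠ i₀, h i = h' i := fun i hi => congrFun heq ⟨i, hi⟩
    have hsum : ∑ i, L.2 i * h i = ∑ i, L.2 i * h' i :=
      add_left_cancel ((mem_filter.1 hh).2.trans (mem_filter.1 hh').2.symm)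
    rw [← add_sum_erase _ _ (mem_univ i₀), ← add_sum_erase _ _ (mem_univ i₀),
      sum_congr rfl fun i hi => by rw [hrest i (ne_of_mem_erase hi)]] at hsum
    have hi₀' : h i₀ = h' i₀ := mul_left_cancel₀ hi₀ (add_right_cancel hsum)
    funext i
    rcases eq_or_ne i i₀ with rfl | hi
    exacts [hi₀', hrest i hi]

lemma sum_affineEval_le_of_const {f : ℕ → ℝ} {K : ℝ} (hf : ∀ n, 0 ≤ f n)
    (hK : ∀ N : ℕ, ∑ n ∈ range (N + 1), f n ≤ K * (N + 1)) {L : ℤ × (ι → ℤ)} (hL : L.2 = 0)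
    (N : ℕ) :
    ∑ h ∈ Fintype.piFinset fun _ : ι => Icc (0 : ℤ) N, f (affineEval L h).natAbs
      ≤ K * (affineHeight L + 1) * (N + 1) ^ Fintype.card ι := by
  have heval : ∀ h, (affineEval L h).natAbs = affineHeight L := fun h => by
    simp [affineEval, affineHeight, hL]
  have hcard : #(Fintype.piFinset fun _ : ι => Icc (0 : ℤ) N) = (N + 1) ^ Fintype.card ι := by
    simp
  have hterm : f (affineHeight L) ≤ K * (affineHeight L + 1) :=
    (single_le_sum (fun n _ => hf n) (self_mem_range_succ _)).trans (hK _)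
  simp only [heval, sum_const, hcard, nsmul_eq_mul, Nat.cast_pow, Nat.cast_add, Nat.cast_one]
  rw [mul_comm]
  gcongr

lemma sum_affineEval_le_of_ne_zero {f : ℕ → ℝ} {K : ℝ} (hf : ∀ n, 0 ≤ f n)
    (hK : ∀ N : ℕ, ∑ n ∈ range (N + 1), f n ≤ K * (N + 1)) {L : ℤ × (ι → ℤ)} {i₀ : ι}
    (hi₀ : L.2 i₀ ≠ 0) (N : ℕ) :
    ∑ h ∈ Fintype.piFinset fun _ : ι => Icc (0 : ℤ) N, f (affineEval L h).natAbs
      ≤ 2 * K * (affineHeight L + 1) * (N + 1) ^ Fintype.card ι := by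
  set X := affineHeight L * (N + 1)
  have hK0 : 0 ≤ K := by simpa using (sum_nonneg fun n _ => hf n).trans (hK 0)
  have hmaps : ∀ h ∈ Fintype.piFinset fun _ : ι => Icc (0 : ℤ) N,
      affineEval L h ∈ Icc (-(X : ℤ)) X := fun h hh => by
    have hle : (affineEval L h).natAbs ≤ X :=
      natAbs_affineEval_le L (Nat.le_add_left 1 N) fun i => by
        have := mem_Icc.1 (Fintype.mem_piFinset.1 hh i)
        lia
    rw [mem_Icc]
    lia
  have hfiber : ∀ b, #{h ∈ Fintype.piFinset fun _ : ι => Icc (0 : ℤ) N | affineEval L h = b}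
      ≤ (N + 1) ^ (Fintype.card ι - 1) := fun b => by
    simpa using card_filter_affineEval_eq_le L hi₀ (Icc (0 : ℤ) N) b
  have : Nonempty ι := ⟨i₀⟩
  calc ∑ h ∈ Fintype.piFinset fun _ : ι => Icc (0 : ℤ) N, f (affineEval L h).natAbs
      ≤ ((N + 1) ^ (Fintype.card ι - 1) : ℕ) * ∑ z ∈ Icc (-(X : ℤ)) X, f z.natAbs :=
        sum_comp_le_mul_sum_of_card_fiber_le (fun z => hf z.natAbs) hmaps hfiber
    _ ≤ ((N + 1) ^ (Fintype.card ι - 1) : ℕ) * (2 * (K * (X + 1))) := by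
        gcongr
        exact (sum_Icc_natAbs_le hf X).trans (mul_le_mul_of_nonneg_left (hK X) zero_le_two)
    _ ≤ (N + 1) ^ (Fintype.card ι - 1) * (2 * (K * ((affineHeight L + 1) * (N + 1)))) := by
        push_cast [X]
        gcongr
        linarith [N.cast_nonneg (α := ℝ)]
    _ = 2 * K * (affineHeight L + 1) * ((N + 1) ^ (Fintype.card ι - 1) * (N + 1)) := by ring
    _ = 2 * K * (affineHeight L + 1) * (N + 1) ^ Fintype.card ι := by
        rw [pow_sub_one_mul Fintype.card_ne_zero]

lemma exists_sum_affineEval_le {f : ℕ → ℝ} {K : ℝ} (hf : ∀ n, 0 ≤ f n)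
    (hK : ∀ N : ℕ, ∑ n ∈ range (N + 1), f n ≤ K * (N + 1)) (L : ℤ × (ι → ℤ)) :
    ∃ K' : ℝ, ∀ N : ℕ,
      ∑ h ∈ Fintype.piFinset fun _ : ι => Icc (0 : ℤ) N, f (affineEval L h).natAbs
        ≤ K' * (N + 1) ^ Fintype.card ι := by
  by_cases hL : L.2 = 0
  · exact ⟨_, sum_affineEval_le_of_const hf hK hL⟩
  · obtain ⟨i₀, hi₀⟩ := Function.ne_iff.1 hL
    exact ⟨_, sum_affineEval_le_of_ne_zero hf hK hi₀⟩

lemma exists_sum_sum_eulerWeight_affineEval_pow_le (𝓠 : Finset (ℤ × (ι → ℤ))) (B : ℕ) :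
    ∃ K : ℝ, 0 < K ∧ ∀ H : ℝ, 1 ≤ H →
      ∑ h ∈ Fintype.piFinset fun _ : ι => Icc (0 : ℤ) ⌊H⌋,
        ∑ Q ∈ 𝓠, eulerWeight (affineEval Q h).natAbs ^ B ≤ K * H ^ Fintype.card ι := by
  obtain ⟨K, hK⟩ := exists_sum_eulerWeight_pow_le B
  choose K' hK' using fun Q : ℤ × (ι → ℤ) =>
    exists_sum_affineEval_le (fun n => pow_nonneg (eulerWeight_nonneg n) B) hK Q
  refine ⟨(∑ Q ∈ 𝓠, |K' Q| + 1) * 2 ^ Fintype.card ι, by positivity, fun H hH => ?_⟩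
  have hfloor : (⌊H⌋₊ : ℝ) + 1 ≤ 2 * H := by linarith [Nat.floor_le (zero_le_one.trans hH)]
  rw [← Int.natCast_floor_eq_floor (zero_le_one.trans hH), sum_comm]
  calc ∑ Q ∈ 𝓠, ∑ h ∈ Fintype.piFinset fun _ : ι => Icc (0 : ℤ) ⌊H⌋₊,
        eulerWeight (affineEval Q h).natAbs ^ B
      ≤ ∑ Q ∈ 𝓠, |K' Q| * ((⌊H⌋₊ : ℝ) + 1) ^ Fintype.card ι :=
        sum_le_sum fun Q _ => (hK' Q _).trans (by gcongr; exact le_abs_self _)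
    _ = (∑ Q ∈ 𝓠, |K' Q|) * ((⌊H⌋₊ : ℝ) + 1) ^ Fintype.card ι := by rw [sum_mul]
    _ ≤ (∑ Q ∈ 𝓠, |K' Q| + 1) * (2 * H) ^ Fintype.card ι := by
        gcongr
        exact le_add_of_nonneg_right zero_le_one
    _ = (∑ Q ∈ 𝓠, |K' Q| + 1) * 2 ^ Fintype.card ι * H ^ Fintype.card ι := by
        rw [mul_pow, mul_assoc]

end AffineForm

section SingularSeries

variable {k : ℕ} {v : Fin k → ℤ}

/-- The local factor of the singular series at `p`. -/
noncomputable def singFactor (v : Fin k → ℤ) (p : ℕ) : ℝ :=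
  (1 - (nuP v p : ℝ) / p) * eulerFactor p ^ k

/-- The product of `|v i - v j|` over ordered pairs `i ≠ j`. -/
def differenceProduct (v : Fin k → ℤ) : ℕ :=
  ∏ x ∈ (univ : Finset (Fin k)).offDiag, (v x.1 - v x.2).natAbs

lemma differenceProduct_ne_zero (hv : Function.Injective v) : differenceProduct v ≠ 0 :=
  prod_ne_zero_iff.2 fun _ hx =>
    Int.natAbs_ne_zero.2 (sub_ne_zero.2 (hv.ne (mem_offDiag.1 hx).2.2))

lemma singSeries_eq_tprod_singFactor (v : Fin k → ℤ) :
    singSeries v = ∏' p : Nat.Primes, singFactor v p := by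
  simp only [singSeries, singFactor, eulerFactor, zpow_neg, zpow_natCast, inv_pow]

lemma nuP_le_self (v : Fin k → ℤ) (p : ℕ) [NeZero p] : nuP v p ≤ p :=
  (card_le_univ _).trans (ZMod.card p).le

lemma nuP_lt_of_not_injective (hv : ¬ Function.Injective v) (p : ℕ) : nuP v p < k := by
  refine (card_image_le.trans (card_fin k).le).lt_of_ne fun heq => hv ?_
  have hinj : Set.InjOn (fun i => (v i : ZMod p)) (univ : Finset (Fin k)) :=
    card_image_iff.1 (heq.trans (card_fin k).symm)
  exact fun i j hij => hinj (mem_coe.2 (mem_univ i)) (mem_coe.2 (mem_univ j))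
    (congrArg (Int.cast : ℤ → ZMod p) hij)

lemma nuP_eq_of_not_dvd_differenceProduct {p : ℕ} (hp : ¬ p ∣ differenceProduct v) :
    nuP v p = k := by
  rw [nuP, card_image_of_injective, card_fin]
  intro i j hij
  by_contra hne
  have hdvd : p ∣ (v i - v j).natAbs :=
    Int.natCast_dvd.1 ((ZMod.intCast_eq_intCast_iff_dvd_sub _ _ _).1 hij.symm)
  have hmem : (i, j) ∈ (univ : Finset (Fin k)).offDiag :=
    mem_offDiag.2 ⟨mem_univ i, mem_univ j, hne⟩
  exact hp (hdvd.trans (dvd_prod_of_mem (fun x : Fin k × Fin k => (v x.1 - v x.2).natAbs) hmem))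

lemma singFactor_nonneg (v : Fin k → ℤ) {p : ℕ} (hp : 2 ≤ p) : 0 ≤ singFactor v p := by
  have : NeZero p := ⟨by lia⟩
  refine mul_nonneg (sub_nonneg.2 (div_le_one_of_le₀ ?_ p.cast_nonneg))
    (pow_nonneg (zero_le_one.trans (one_le_eulerFactor hp)) k)
  exact_mod_cast nuP_le_self v p

lemma singFactor_le_eulerFactor_pow (v : Fin k → ℤ) {p : ℕ} (hp : 2 ≤ p) :
    singFactor v p ≤ eulerFactor p ^ k :=
  mul_le_of_le_one_left (pow_nonneg (zero_le_one.trans (one_le_eulerFactor hp)) k)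
    (sub_le_self _ (by positivity))

lemma singFactor_le_one_of_nuP_eq {p : ℕ} (hp : 2 ≤ p) (hv : nuP v p = k) :
    singFactor v p ≤ 1 := by
  have hp' : 1 / (p : ℝ) ≤ 1 / 2 :=
    one_div_le_one_div_of_le two_pos (by exact_mod_cast hp)
  rw [singFactor, eulerFactor, hv, inv_pow, ← div_eq_mul_inv,
    div_le_one (pow_pos (by linarith) k)]
  -- Bernoulli's inequality.
  calc 1 - (k : ℝ) / p = 1 + k * -(1 / (p : ℝ)) := by ring
    _ ≤ (1 + -(1 / (p : ℝ))) ^ k := one_add_mul_le_pow (by linarith) k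
    _ = (1 - 1 / (p : ℝ)) ^ k := by rw [← sub_eq_add_neg]

lemma one_add_one_div_two_mul_le_singFactor {p : ℕ} (hp : 2 ≤ p) (hv : nuP v p < k)
    (hpk : 2 * k ^ 2 ≤ p) : 1 + 1 / 2 * (1 / (p : ℝ)) ≤ singFactor v p := by
  set x : ℝ := 1 / (p : ℝ) with hx
  have hp0 : (0 : ℝ) < p := by exact_mod_cast (by lia : 0 < p)
  have hx0 : 0 < x := by positivity
  have hk : (1 : ℝ) ≤ k := by exact_mod_cast (by lia : 1 ≤ k)
  have hkx : 2 * (k : ℝ) ^ 2 * x ≤ 1 := by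
    rw [hx, mul_one_div, div_le_one hp0]
    exact_mod_cast hpk
  have hlocal : 1 - (k - 1) * x ≤ 1 - (nuP v p : ℝ) / p := by
    rw [div_eq_mul_one_div]
    gcongr
    linarith [(by exact_mod_cast hv : (nuP v p : ℝ) + 1 ≤ k)]
  have heuler : 1 + k * x ≤ eulerFactor p ^ k :=
    (one_add_mul_le_pow (by linarith) k).trans
      (pow_le_pow_left₀ (by linarith) (one_add_one_div_le_eulerFactor hp) k)
  have hlocal0 : 0 ≤ 1 - (k - 1) * x := by nlinarith
  calc 1 + 1 / 2 * x ≤ (1 - (k - 1) * x) * (1 + k * x) := by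
        nlinarith [mul_le_mul_of_nonneg_right hkx hx0.le]
    _ ≤ singFactor v p := mul_le_mul hlocal heuler (by positivity) (hlocal0.trans hlocal)

-- If two values coincide, the factors are at least `1 + 1/(2p)` for large `p`, so unless one of
-- them vanishes the product diverges and `∏'` takes its default value `1`.
lemma singSeries_le_one_of_not_injective (hv : ¬ Function.Injective v) : singSeries v ≤ 1 := by
  rw [singSeries_eq_tprod_singFactor]
  by_cases hmul : Multipliable fun p : Nat.Primes => singFactor v p
  swap
  · rw [tprod_eq_one_of_not_multipliable hmul]
  by_cases hzero : ∃ p : Nat.Primes, singFactor v p = 0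
  · rw [tprod_of_exists_eq_zero hzero]
    exact zero_le_one
  push Not at hzero
  have hlarge : ∀ᶠ p : Nat.Primes in Filter.cofinite, 2 * k ^ 2 ≤ (p : ℕ) :=
    Nat.Primes.coe_nat_injective.tendsto_cofinite.eventually
      (Nat.cofinite_eq_atTop ▸ Filter.eventually_ge_atTop (2 * k ^ 2))
  have hsummable : Summable fun p : Nat.Primes => 1 / 2 * (1 / ((p : ℕ) : ℝ)) :=
    summable_of_multipliable_of_one_add_le hmul hzero (fun p => by positivity)
      (hlarge.mono fun p hp =>
        one_add_one_div_two_mul_le_singFactor p.2.two_le (nuP_lt_of_not_injective hv p) hp)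
  exact absurd ((summable_mul_left_iff (by norm_num)).1 hsummable) Nat.Primes.not_summable_one_div

lemma singSeries_le_eulerWeight_differenceProduct_pow (v : Fin k → ℤ) :
    singSeries v ≤ eulerWeight (differenceProduct v) ^ k := by
  by_cases hv : Function.Injective v
  swap
  · exact (singSeries_le_one_of_not_injective hv).trans (one_le_pow₀ (one_le_eulerWeight _))
  set D := differenceProduct v
  have hmem : ∀ p : Nat.Primes, (p : ℕ) ∣ D → p ∈ D.primeFactors.subtype Nat.Prime :=
    fun p hdvd => mem_subtype.2
      (Nat.mem_primeFactors.2 ⟨p.2, hdvd, differenceProduct_ne_zero hv⟩)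
  calc singSeries v = ∏' p : Nat.Primes, singFactor v p := singSeries_eq_tprod_singFactor v
    _ ≤ ∏ p ∈ D.primeFactors.subtype Nat.Prime, eulerFactor p ^ k :=
        tprod_le_prod_of_le_one_of_notMem (fun p => singFactor_nonneg v p.2.two_le)
          (fun p _ => one_le_pow₀ (one_le_eulerFactor p.2.two_le))
          (fun p _ => singFactor_le_eulerFactor_pow v p.2.two_le)
          fun p hp => singFactor_le_one_of_nuP_eq p.2.two_le
            (nuP_eq_of_not_dvd_differenceProduct fun hdvd => hp (hmem p hdvd))
    _ = ∏ p ∈ D.primeFactors, eulerFactor p ^ k :=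
        prod_subtype_of_mem (fun p => eulerFactor p ^ k) fun _ => Nat.prime_of_mem_primeFactors
    _ = eulerWeight D ^ k := prod_pow _ _ _

open scoped Pointwise in
lemma singSeries_affineEval_le_sum {ι : Type*} [Fintype ι]
    {𝓛 : Finset (ℤ × (ι → ℤ))} (h𝓛 : 𝓛.Nonempty) {L : Fin k → ℤ × (ι → ℤ)}
    (hL : ∀ j, L j ∈ 𝓛) (h : ι → ℤ) :
    singSeries (fun j => affineEval (L j) h) ≤
      ∑ Q ∈ 𝓛 - 𝓛, eulerWeight (affineEval Q h).natAbs ^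
        (k * #(univ : Finset (Fin k)).offDiag) := by
  calc singSeries (fun j => affineEval (L j) h)
      ≤ eulerWeight (differenceProduct fun j => affineEval (L j) h) ^ k :=
        singSeries_le_eulerWeight_differenceProduct_pow _
    _ ≤ (∏ x ∈ (univ : Finset (Fin k)).offDiag,
          eulerWeight (affineEval (L x.1 - L x.2) h).natAbs) ^ k := by
        simp only [affineEval_sub]
        exact pow_le_pow_left₀ (eulerWeight_nonneg _) (eulerWeight_prod_le _ _) k
    _ = ∏ x ∈ (univ : Finset (Fin k)).offDiag,
          eulerWeight (affineEval (L x.1 - L x.2) h).natAbs ^ k := (prod_pow _ _ _).symm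
    _ ≤ ∑ Q ∈ 𝓛 - 𝓛, (eulerWeight (affineEval Q h).natAbs ^ k) ^
          #(univ : Finset (Fin k)).offDiag :=
        prod_comp_le_sum_pow_card (g := fun x : Fin k × Fin k => L x.1 - L x.2)
          (w := fun Q => eulerWeight (affineEval Q h).natAbs ^ k) (h𝓛.sub h𝓛)
          (fun x _ => sub_mem_sub (hL x.1) (hL x.2)) fun _ => pow_nonneg (eulerWeight_nonneg _) k
    _ = _ := by simp only [← pow_mul]

end SingularSeries

open scoped Pointwise in
theorem singSeries_affine_forms_average_general {ι : Type*} [Fintype ι] [DecidableEq ι]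
    (k A : ℕ) :
    ∃ K : ℝ, 0 < K ∧ ∀ H : ℝ, 1 ≤ H →
      ∑ h ∈ Fintype.piFinset (fun _ : ι => Finset.Icc (0 : ℤ) ⌊H⌋),
        sSup {S : ℝ | ∃ (c : Fin k → ℤ) (M : ι → Fin k → ℤ),
          (∀ j, |c j| ≤ (A : ℤ)) ∧ (∀ i j, |M i j| ≤ (A : ℤ)) ∧
          S = singSeries (fun j => c j + ∑ i, M i j * h i)}
      ≤ K * H ^ Fintype.card ι := by
  set I : Finset ℤ := Icc (-A) A
  have hI : I.Nonempty := nonempty_Icc.2 (neg_le_self (Int.natCast_nonneg A))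
  set 𝓛 : Finset (ℤ × (ι → ℤ)) := I ×ˢ Fintype.piFinset fun _ => I
  have h𝓛 : 𝓛.Nonempty := hI.product (Fintype.piFinset_nonempty.2 fun _ => hI)
  obtain ⟨K, hK, hbound⟩ := exists_sum_sum_eulerWeight_affineEval_pow_le (𝓛 - 𝓛)
    (k * #(univ : Finset (Fin k)).offDiag)
  refine ⟨K, hK, fun H hH => (sum_le_sum fun h _ => Real.sSup_le ?_ ?_).trans (hbound H hH)⟩
  · rintro S ⟨c, M, hc, hM, rfl⟩
    refine singSeries_affineEval_le_sum h𝓛 (L := fun j => (c j, fun i => M i j)) (fun j => ?_) h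
    exact mem_product.2 ⟨mem_Icc.2 (abs_le.1 (hc j)),
      Fintype.mem_piFinset.2 fun i => mem_Icc.2 (abs_le.1 (hM i j))⟩
  · exact sum_nonneg fun Q _ => pow_nonneg (eulerWeight_nonneg _) _

/-- **Corollary 2.6.** For fixed `k ≥ m ≥ 1` and `A ≥ 1`,
`∑_{h ∈ ([0,H]∩ℤ)^m} sup_{L₁,…,L_k} 𝔖({L₁(h),…,L_k(h)}) ≪_{k,A} H^m`, the
supremum ranging over affine-linear forms `L_j(h₁,…,h_m) = a_j + ∑_i a_{i,j}h_i`
with integer coefficients bounded by `A` in absolute value. -/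
theorem singSeries_affine_forms_average (k m A : ℕ) (hm : 1 ≤ m) (hkm : m ≤ k)
    (hA : 1 ≤ A) :
    ∃ K : ℝ, 0 < K ∧ ∀ H : ℝ, 1 ≤ H →
      ∑ h ∈ Fintype.piFinset (fun _ : Fin m => Finset.Icc (0 : ℤ) ⌊H⌋),
        sSup {S : ℝ | ∃ (c : Fin k → ℤ) (M : Fin m → Fin k → ℤ),
          (∀ j, |c j| ≤ (A : ℤ)) ∧ (∀ i j, |M i j| ≤ (A : ℤ)) ∧
          S = singSeries (fun j => c j + ∑ i, M i j * h i)}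
      ≤ K * H ^ m := by
  simpa only [Fintype.card_fin] using singSeries_affine_forms_average_general (ι := Fin m) k A
end
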